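/- Let q(x,t) be a polynomial function on ℝ^{n+1} such that H*q = 0 everywhere. Then there exist a non-negative integer m and real constants c_α for |α| ≤ m such that q(x,t) = Σ_{|α| ≤ m} c_α w_α(x,t) for all (x,t) ∈ ℝ^{n+1}. -/

import Mathlib

/-!
A polynomial solution of `H* q = 0` is determined by its restriction to `t = 0`: if `t` divides `q`
and `∂_t q = - L q`, where `L = Σ a_hk ∂_h ∂_k`, then every power of `t` divides `q`
(`eq_zero_of_formal`). The difference of `q` and the combination `Σ c_α w_α`, where `c_α` are the
coefficients of `q(x, 0)`, therefore vanishes once it is known that `w_α` is a polynomial solution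
with `w_α(x, 0) = x^α`.

The latter is obtained formally in the polynomial ring in `x, t, ξ`. With
`Φ = ⟨x, ξ⟩ - t Σ a_hk ξ_h ξ_k`, each derivative of `R exp Φ` has the form `(∇_v R) exp Φ` with
`∇_v R = ∂_v R + R ∂_v Φ` (`conjD`). The operators `∇_v` commute, and the conjugate
`Σ a_hk ∇_{x_h} ∇_{x_k} + ∇_t` of `H*` kills `1`, hence kills everything obtained from `1` by
applying the `∇_{ξ_i}`. Setting `ξ = 0` turns `∇_{x_h}` and `∇_t` into `∂_{x_h}` and `∂_t`, which
gives the equation for `w_α`; setting `t = 0` turns `∇_{ξ_i}` into `∂_{ξ_i} + x_i`, which gives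
the initial value (`exists_fold`, `exists_wPoly`).
-/

open MeasureTheory Matrix Real

/-- The adjoint parabolic operator `H* u = Σ a_hk ∂²u/∂x_h∂x_k + ∂u/∂t`. -/
noncomputable def HstarOp (n : ℕ) (A : Matrix (Fin n) (Fin n) ℝ)
    (u : (Fin n → ℝ) × ℝ → ℝ) (z : (Fin n → ℝ) × ℝ) : ℝ :=
  (∑ h, ∑ k, A h k *
      fderiv ℝ (fun w => fderiv ℝ u w (Pi.single h 1, 0)) z (Pi.single k 1, 0))
    + fderiv ℝ u z (0, 1)

/-- Partial derivative in the `i`-th coordinate direction. -/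
noncomputable def pderivOp (n : ℕ) (i : Fin n) (f : (Fin n → ℝ) → ℝ) : (Fin n → ℝ) → ℝ :=
  fun ξ => fderiv ℝ f ξ (Pi.single i 1)

/-- The multi-index derivative `D^α = ∂^{α₁}_{ξ₁} ⋯ ∂^{αₙ}_{ξₙ}`. -/
noncomputable def multiDeriv (n : ℕ) (α : Fin n → ℕ) (f : (Fin n → ℝ) → ℝ) :
    (Fin n → ℝ) → ℝ :=
  ((List.ofFn fun i : Fin n => (pderivOp n i)^[α i]).foldr (· ∘ ·) id) f

/-- The parabolic polynomial `w_α(x,t) = D^α_ξ (exp(⟨x,ξ⟩ - t Σ a_hk ξ_h ξ_k))|_{ξ=0}`. -/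
noncomputable def wPoly (n : ℕ) (A : Matrix (Fin n) (Fin n) ℝ) (α : Fin n → ℕ)
    (x : Fin n → ℝ) (t : ℝ) : ℝ :=
  multiDeriv n α (fun ξ => Real.exp (x ⬝ᵥ ξ - t * ∑ h, ∑ k, A h k * ξ h * ξ k)) 0

/-- The finite set of multi-indices `α` with `|α| = α₁ + ⋯ + αₙ ≤ m`. -/
noncomputable def multiIndicesLE (n m : ℕ) : Finset (Fin n → ℕ) :=
  (Finset.Icc (0 : Fin n → ℕ) fun _ => m).filter fun α => ∑ i, α i ≤ m

/-- `u` is a polynomial function of the `n+1` variables `(x₁,…,xₙ,t)`. -/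
def IsPolynomialFun (n : ℕ) (u : (Fin n → ℝ) × ℝ → ℝ) : Prop :=
  ∃ P : MvPolynomial (Fin n ⊕ Unit) ℝ,
    ∀ z : (Fin n → ℝ) × ℝ, u z = MvPolynomial.eval (Sum.elim z.1 fun _ => z.2) P

open MvPolynomial in
/-- If `g` has partial derivative `δ_{v v₀}` in the direction `e`, then differentiating
`z ↦ P(g z)` in that direction amounts to the formal derivative in the variable `v₀`. -/
lemma fderiv_eval_comp {E : Type*} [NormedAddCommGroup E] [NormedSpace ℝ E] {τ : Type*}
    [DecidableEq τ] (g : E → τ → ℝ) (hg : ∀ v, Differentiable ℝ fun z => g z v) (e : E) (v₀ : τ)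
    (he : ∀ v z, fderiv ℝ (fun z => g z v) z e = if v = v₀ then 1 else 0)
    (P : MvPolynomial τ ℝ) :
    Differentiable ℝ (fun z => eval (g z) P) ∧
      ∀ z, fderiv ℝ (fun z => eval (g z) P) z e = eval (g z) (pderiv v₀ P) := by
  induction P using MvPolynomial.induction_on with
  | C a => simp
  | add p q hp hq =>
    refine ⟨by simpa using hp.1.fun_add hq.1, fun z => ?_⟩
    simp only [map_add]
    rw [fderiv_fun_add (hp.1 z) (hq.1 z)]
    simp [hp.2 z, hq.2 z]
  | mul_X p v hp =>
    refine ⟨by simpa using hp.1.fun_mul (hg v), fun z => ?_⟩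
    simp only [map_mul, eval_X]
    rw [fderiv_fun_mul (hp.1 z) (hg v z)]
    simp only [_root_.add_apply, _root_.smul_apply, hp.2 z, he,
      Derivation.leibniz, pderiv_X, smul_eq_mul, map_add, map_mul, eval_X]
    by_cases h : v = v₀
    · subst h; simp
    · simp [h]

/-- The variables `x_1, …, x_n, t`. -/
abbrev XT (n : ℕ) := Fin n ⊕ Unit

open MvPolynomial in
/-- The operator `H*` on the polynomial ring in `x, t`. -/
noncomputable def formalH (n : ℕ) (A : Matrix (Fin n) (Fin n) ℝ) (P : MvPolynomial (XT n) ℝ) :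
    MvPolynomial (XT n) ℝ :=
  (∑ h, ∑ k, C (A h k) * pderiv (Sum.inl k) (pderiv (Sum.inl h) P)) + pderiv (Sum.inr ()) P

open MvPolynomial in
lemma fderiv_eval_XT (n : ℕ) (P : MvPolynomial (XT n) ℝ) :
    (∀ h z, fderiv ℝ (fun z : (Fin n → ℝ) × ℝ => eval (Sum.elim z.1 fun _ => z.2) P) z
        (Pi.single h 1, 0) = eval (Sum.elim z.1 fun _ => z.2) (pderiv (Sum.inl h) P)) ∧
    (∀ z, fderiv ℝ (fun z : (Fin n → ℝ) × ℝ => eval (Sum.elim z.1 fun _ => z.2) P) z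
        (0, 1) = eval (Sum.elim z.1 fun _ => z.2) (pderiv (Sum.inr ()) P)) := by
  have hl : ∀ (v : Fin n) (z : (Fin n → ℝ) × ℝ),
      HasFDerivAt (fun z : (Fin n → ℝ) × ℝ => z.1 v)
        ((ContinuousLinearMap.proj (R := ℝ) (φ := fun _ : Fin n => ℝ) v).comp
          (ContinuousLinearMap.fst ℝ (Fin n → ℝ) ℝ)) z := fun v z =>
    ((ContinuousLinearMap.proj (R := ℝ) (φ := fun _ : Fin n => ℝ) v).comp
          (ContinuousLinearMap.fst ℝ (Fin n → ℝ) ℝ)).hasFDerivAt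
  have hr : ∀ (z : (Fin n → ℝ) × ℝ),
      HasFDerivAt (fun z : (Fin n → ℝ) × ℝ => z.2) (ContinuousLinearMap.snd ℝ (Fin n → ℝ) ℝ) z :=
    fun z => (ContinuousLinearMap.snd ℝ (Fin n → ℝ) ℝ).hasFDerivAt
  have hg : ∀ v, Differentiable ℝ fun z : (Fin n → ℝ) × ℝ =>
      (Sum.elim z.1 (fun _ => z.2) : XT n → ℝ) v := by
    rintro (v | v)
    · exact fun z => (hl v z).differentiableAt
    · exact fun z => (hr z).differentiableAt
  refine ⟨fun h => (fderiv_eval_comp _ hg _ (Sum.inl h) ?_ P).2,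
    (fderiv_eval_comp _ hg _ (Sum.inr ()) ?_ P).2⟩
  · rintro (v | v) z
    · simp [(hl v z).fderiv, Pi.single_apply]
    · simp [(hr z).fderiv]
  · rintro (v | v) z
    · simp [(hl v z).fderiv]
    · simp [(hr z).fderiv]

open MvPolynomial in
lemma HstarOp_eval (n : ℕ) (A : Matrix (Fin n) (Fin n) ℝ) (P : MvPolynomial (XT n) ℝ)
    (z : (Fin n → ℝ) × ℝ) :
    HstarOp n A (fun z => eval (Sum.elim z.1 fun _ => z.2) P) z =
      eval (Sum.elim z.1 fun _ => z.2) (formalH n A P) := by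
  unfold HstarOp formalH
  simp only [(fderiv_eval_XT n _).1, (fderiv_eval_XT n _).2, map_add, map_sum, map_mul, eval_C]

open MvPolynomial in
/-- The restriction to `t = 0`. -/
noncomputable def atZero (n : ℕ) : MvPolynomial (XT n) ℝ →ₐ[ℝ] MvPolynomial (Fin n) ℝ :=
  aeval (Sum.elim X fun _ => 0)

open MvPolynomial in
lemma X_dvd_sub_atZero (n : ℕ) (P : MvPolynomial (XT n) ℝ) :
    (X (Sum.inr ()) : MvPolynomial (XT n) ℝ) ∣ P - rename Sum.inl (atZero n P) := by
  induction P using MvPolynomial.induction_on with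
  | C a => simp [atZero]
  | add p q hp hq =>
    have := dvd_add hp hq
    simp only [map_add]
    convert this using 1
    ring
  | mul_X p v hp =>
    rcases v with v | v
    · have := dvd_mul_of_dvd_left hp (X (Sum.inl v))
      convert this using 1
      simp [atZero]
      ring
    · simp [atZero]

open MvPolynomial in
/-- A formal solution of `H* P = 0` that vanishes at `t = 0`, hence is divisible by `t`, is zero:
writing `P = t^k S` with `k ≥ 1`,
the equation reads `k S = - t H* S`, so `t ∣ S`. -/
lemma eq_zero_of_formal (n : ℕ) (A : Matrix (Fin n) (Fin n) ℝ) (P : MvPolynomial (XT n) ℝ)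
    (hP : formalH n A P = 0) (h0 : atZero n P = 0) : P = 0 := by
  have h1 : (X (Sum.inr ()) : MvPolynomial (XT n) ℝ) ∣ P := by
    simpa [h0] using X_dvd_sub_atZero n P
  have key : ∀ k : ℕ, (X (Sum.inr ()) : MvPolynomial (XT n) ℝ) ^ (k + 1) ∣ P := by
    intro k
    induction k with
    | zero => simpa using h1
    | succ k ih =>
      obtain ⟨R, rfl⟩ := ih
      have e : formalH n A (X (Sum.inr ()) ^ (k + 1) * R) =
          X (Sum.inr ()) ^ k * (C ((k : ℝ) + 1) * R + X (Sum.inr ()) * formalH n A R) := by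
        have hx : ∀ (i : Fin n) (Q : MvPolynomial (XT n) ℝ),
            pderiv (Sum.inl i) (X (Sum.inr ()) ^ (k + 1) * Q) =
              X (Sum.inr ()) ^ (k + 1) * pderiv (Sum.inl i) Q := by
          intro i Q
          simp [Derivation.leibniz, Derivation.leibniz_pow, pderiv_X]
        have ht : pderiv (Sum.inr ()) (X (Sum.inr ()) ^ (k + 1) * R) =
            X (Sum.inr ()) ^ k * (C ((k : ℝ) + 1) * R
              + X (Sum.inr ()) * pderiv (Sum.inr ()) R) := by
          simp [Derivation.leibniz, Derivation.leibniz_pow, pderiv_X]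
          ring
        unfold formalH
        simp only [hx, ht]
        have : ∀ h i, C (A h i) * (X (Sum.inr ()) ^ (k + 1)
              * pderiv (Sum.inl i) (pderiv (Sum.inl h) R)) =
            X (Sum.inr ()) ^ (k + 1) *
              (C (A h i) * pderiv (Sum.inl i) (pderiv (Sum.inl h) R)) := fun h i => by ring
        simp only [this, ← Finset.mul_sum]
        ring
      rw [e] at hP
      have h2 := (mul_eq_zero.mp hP).resolve_left (pow_ne_zero _ (X_ne_zero _))
      have h3 : (X (Sum.inr ()) : MvPolynomial (XT n) ℝ) ∣ C ((k : ℝ) + 1) * R :=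
        ⟨- formalH n A R, by linear_combination h2⟩
      have h4 : (X (Sum.inr ()) : MvPolynomial (XT n) ℝ) ∣ R := by
        have h5 := dvd_mul_of_dvd_right h3 (C ((k : ℝ) + 1)⁻¹)
        rwa [← mul_assoc, ← C_mul, inv_mul_cancel₀ (by positivity), C_1, one_mul] at h5
      rw [pow_succ _ (k + 1)]
      exact mul_dvd_mul_left _ h4
  by_contra hne
  obtain ⟨k, hk⟩ := FiniteMultiplicity.of_not_isUnit
    (X_prime (i := (Sum.inr () : XT n)) (R := ℝ)).not_isUnit hne
  exact hk (key k)

/-- The variables `x_1, …, x_n, t, ξ_1, …, ξ_n`. -/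
abbrev XTXi (n : ℕ) := XT n ⊕ Fin n

open MvPolynomial in
/-- For `Φ` fixed, the operator `∇_v R = ∂_v R + R ∂_v Φ`, that is
`∂_v (R exp Φ) = (∇_v R) exp Φ`. -/
noncomputable def conjD {τ : Type*} (Φ : MvPolynomial τ ℝ) (v : τ) (R : MvPolynomial τ ℝ) :
    MvPolynomial τ ℝ :=
  pderiv v R + R * pderiv v Φ

open MvPolynomial in
lemma pderiv_comm' {τ : Type*} (v w : τ) (R : MvPolynomial τ ℝ) :
    pderiv v (pderiv w R) = pderiv w (pderiv v R) := by
  classical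
  induction R using MvPolynomial.induction_on with
  | C a => simp
  | add p q hp hq => simp [hp, hq]
  | mul_X p u hp =>
    simp only [Derivation.leibniz, pderiv_X, smul_eq_mul, map_add, hp, Pi.single_apply]
    split_ifs <;> simp <;> ring

open MvPolynomial in
lemma conjD_comm {τ : Type*} (Φ : MvPolynomial τ ℝ) (v w : τ) (R : MvPolynomial τ ℝ) :
    conjD Φ v (conjD Φ w R) = conjD Φ w (conjD Φ v R) := by
  unfold conjD
  simp only [map_add, Derivation.leibniz, smul_eq_mul]
  rw [pderiv_comm' v w R, pderiv_comm' v w Φ]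
  ring

open MvPolynomial in
/-- The phase `Φ = ⟨x, ξ⟩ - t Σ a_hk ξ_h ξ_k` as a polynomial in `x, t, ξ`. -/
noncomputable def phase (n : ℕ) (A : Matrix (Fin n) (Fin n) ℝ) : MvPolynomial (XTXi n) ℝ :=
  (∑ i, X (Sum.inl (Sum.inl i)) * X (Sum.inr i)) -
    X (Sum.inl (Sum.inr ())) * ∑ h, ∑ k, C (A h k) * X (Sum.inr h) * X (Sum.inr k)

open MvPolynomial in
/-- The operator `H*` conjugated by `exp Φ`, acting on polynomials in `x, t, ξ`. -/
noncomputable def conjH (n : ℕ) (A : Matrix (Fin n) (Fin n) ℝ) (R : MvPolynomial (XTXi n) ℝ) :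
    MvPolynomial (XTXi n) ℝ :=
  (∑ h, ∑ k, C (A h k) * conjD (phase n A) (Sum.inl (Sum.inl k))
      (conjD (phase n A) (Sum.inl (Sum.inl h)) R))
    + conjD (phase n A) (Sum.inl (Sum.inr ())) R

open MvPolynomial in
lemma pderiv_phase_x (n : ℕ) (A : Matrix (Fin n) (Fin n) ℝ) (h : Fin n) :
    pderiv (Sum.inl (Sum.inl h)) (phase n A) = X (Sum.inr h) := by
  simp [phase, Derivation.leibniz, pderiv_X, Pi.single_apply]

open MvPolynomial in
lemma pderiv_phase_t (n : ℕ) (A : Matrix (Fin n) (Fin n) ℝ) :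
    pderiv (Sum.inl (Sum.inr ())) (phase n A) =
      - ∑ h, ∑ k, C (A h k) * X (Sum.inr h) * X (Sum.inr k) := by
  simp [phase, Derivation.leibniz, pderiv_X]

open MvPolynomial in
lemma conjH_one (n : ℕ) (A : Matrix (Fin n) (Fin n) ℝ) : conjH n A 1 = 0 := by
  simp only [conjH, conjD, pderiv_phase_x, pderiv_phase_t]
  simp [pderiv_X, mul_assoc]

open MvPolynomial in
lemma conjD_add {τ : Type*} (Φ : MvPolynomial τ ℝ) (v : τ) (R S : MvPolynomial τ ℝ) :
    conjD Φ v (R + S) = conjD Φ v R + conjD Φ v S := by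
  simp [conjD]; ring

open MvPolynomial in
lemma conjD_sum {τ ι : Type*} (Φ : MvPolynomial τ ℝ) (v : τ) (s : Finset ι)
    (R : ι → MvPolynomial τ ℝ) :
    conjD Φ v (∑ i ∈ s, R i) = ∑ i ∈ s, conjD Φ v (R i) := by
  simp [conjD, Finset.sum_add_distrib, Finset.sum_mul]

open MvPolynomial in
lemma conjD_C_mul {τ : Type*} (Φ : MvPolynomial τ ℝ) (v : τ) (a : ℝ) (R : MvPolynomial τ ℝ) :
    conjD Φ v (C a * R) = C a * conjD Φ v R := by
  simp [conjD, Derivation.leibniz]; ring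

lemma conjH_conjD (n : ℕ) (A : Matrix (Fin n) (Fin n) ℝ) (v : XTXi n)
    (R : MvPolynomial (XTXi n) ℝ) :
    conjH n A (conjD (phase n A) v R) = conjD (phase n A) v (conjH n A R) := by
  unfold conjH
  simp only [conjD_add, conjD_sum, conjD_C_mul]
  simp only [conjD_comm (phase n A) v]

open MvPolynomial in
/-- The restriction to `ξ = 0`. -/
noncomputable def xiZero (n : ℕ) : MvPolynomial (XTXi n) ℝ →ₐ[ℝ] MvPolynomial (XT n) ℝ :=
  aeval (Sum.elim X fun _ => 0)

open MvPolynomial in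
lemma xiZero_pderiv (n : ℕ) (v : XT n) (R : MvPolynomial (XTXi n) ℝ) :
    xiZero n (pderiv (Sum.inl v) R) = pderiv v (xiZero n R) := by
  induction R using MvPolynomial.induction_on with
  | C a => simp [xiZero]
  | add p q hp hq => simp [hp, hq]
  | mul_X p u hp =>
    simp only [Derivation.leibniz, map_mul, map_add, smul_eq_mul, hp]
    rcases u with u | u
    · by_cases h : u = v
      · subst h; simp [xiZero]
      · simp [xiZero, pderiv_X, h]
    · simp [xiZero, pderiv_X]

open MvPolynomial in
/-- At `ξ = 0` the conjugated operator becomes `H*`, because `∂_{x_h} Φ` and `∂_t Φ` vanish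
there. -/
lemma xiZero_conjH (n : ℕ) (A : Matrix (Fin n) (Fin n) ℝ) (R : MvPolynomial (XTXi n) ℝ) :
    xiZero n (conjH n A R) = formalH n A (xiZero n R) := by
  have hx : ∀ h R, xiZero n (conjD (phase n A) (Sum.inl (Sum.inl h)) R) =
      pderiv (Sum.inl h) (xiZero n R) := by
    intro h R
    rw [conjD, pderiv_phase_x, map_add, map_mul, xiZero_pderiv]
    simp [xiZero]
  have ht : ∀ R, xiZero n (conjD (phase n A) (Sum.inl (Sum.inr ())) R) =
      pderiv (Sum.inr ()) (xiZero n R) := by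
    intro R
    rw [conjD, pderiv_phase_t, map_add, map_mul, xiZero_pderiv]
    simp [xiZero]
  unfold conjH formalH
  simp only [map_add, map_sum, map_mul, hx, ht]
  simp [xiZero]

open MvPolynomial in
/-- The substitution `t = 0` in the polynomials in `x, t, ξ`. -/
noncomputable def tZero (n : ℕ) : MvPolynomial (XTXi n) ℝ →ₐ[ℝ] MvPolynomial (XTXi n) ℝ :=
  aeval (Sum.elim (Sum.elim (fun i => X (Sum.inl (Sum.inl i))) fun _ => 0) fun i => X (Sum.inr i))

open MvPolynomial in
lemma tZero_pderiv (n : ℕ) (i : Fin n) (R : MvPolynomial (XTXi n) ℝ) :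
    tZero n (pderiv (Sum.inr i) R) = pderiv (Sum.inr i) (tZero n R) := by
  induction R using MvPolynomial.induction_on with
  | C a => simp [tZero]
  | add p q hp hq => simp [hp, hq]
  | mul_X p u hp =>
    simp only [Derivation.leibniz, map_mul, map_add, smul_eq_mul, hp]
    rcases u with (u | u) | u
    · simp [tZero, pderiv_X]
    · simp [tZero, pderiv_X]
    · by_cases h : u = i
      · subst h; simp [tZero]
      · simp [tZero, pderiv_X, h]

open MvPolynomial in
lemma tZero_conjD (n : ℕ) (A : Matrix (Fin n) (Fin n) ℝ) (i : Fin n)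
    (R : MvPolynomial (XTXi n) ℝ) :
    tZero n (conjD (phase n A) (Sum.inr i) R) =
      pderiv (Sum.inr i) (tZero n R) + tZero n R * X (Sum.inl (Sum.inl i)) := by
  have h : tZero n (phase n A) = ∑ i, X (Sum.inl (Sum.inl i)) * X (Sum.inr i) := by
    simp [phase, tZero]
  rw [conjD, map_add, map_mul, tZero_pderiv, tZero_pderiv, h]
  simp [Derivation.leibniz, pderiv_X, Pi.single_apply]

/-- The point with coordinates `x, t, ξ`. -/
def point (n : ℕ) (x : Fin n → ℝ) (t : ℝ) (ξ : Fin n → ℝ) : XTXi n → ℝ :=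
  Sum.elim (Sum.elim x fun _ => t) ξ

open MvPolynomial in
lemma pderivOp_eval_exp (n : ℕ) (Φ R : MvPolynomial (XTXi n) ℝ)
    (x : Fin n → ℝ) (t : ℝ) (i : Fin n) :
    pderivOp n i (fun ξ => eval (point n x t ξ) R * Real.exp (eval (point n x t ξ) Φ)) =
      fun ξ => eval (point n x t ξ) (conjD Φ (Sum.inr i) R) *
        Real.exp (eval (point n x t ξ) Φ) := by
  have hl : ∀ (v : Fin n) (ξ : Fin n → ℝ), HasFDerivAt (fun ξ : Fin n → ℝ => ξ v)
        (ContinuousLinearMap.proj (R := ℝ) (φ := fun _ : Fin n => ℝ) v) ξ := fun v ξ =>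
    (ContinuousLinearMap.proj (R := ℝ) (φ := fun _ : Fin n => ℝ) v).hasFDerivAt
  have hg : ∀ v, Differentiable ℝ fun ξ => point n x t ξ v := by
    rintro ((v | v) | v)
    · simp [point]
    · simp [point]
    · exact fun z => (hl v z).differentiableAt
  have he : ∀ v ξ, fderiv ℝ (fun ξ => point n x t ξ v) ξ (Pi.single i 1) =
      if v = Sum.inr i then 1 else 0 := by
    rintro ((v | v) | v) ξ
    · simp [point]
    · simp [point]
    · simp [point, (hl v ξ).fderiv, Pi.single_apply]
  have hR := fderiv_eval_comp (point n x t) hg _ _ he R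
  have hΦ := fderiv_eval_comp (point n x t) hg _ _ he Φ
  funext ξ
  unfold pderivOp
  rw [fderiv_fun_mul (hR.1 ξ) (hΦ.1 ξ).exp, fderiv_exp (hΦ.1 ξ)]
  simp only [_root_.add_apply, _root_.smul_apply, smul_eq_mul,
    hR.2, hΦ.2, conjD, map_add, map_mul]
  ring

open MvPolynomial in
/-- Iterated `ξ`-derivatives of `exp Φ` along a list of coordinates: the result is `R exp Φ` with
`R` a polynomial killed by the conjugated `H*` and equal to a monomial in `x` at `t = 0`. -/
lemma exists_fold (n : ℕ) (A : Matrix (Fin n) (Fin n) ℝ) (α : Fin n → ℕ) (l : List (Fin n)) :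
    ∃ R : MvPolynomial (XTXi n) ℝ, conjH n A R = 0 ∧
      tZero n R = rename (fun i => Sum.inl (Sum.inl i)) (l.map fun i => X i ^ α i).prod ∧
      ∀ x t, ((l.map fun i => (pderivOp n i)^[α i]).foldr (· ∘ ·) id)
          (fun ξ => Real.exp (eval (point n x t ξ) (phase n A))) =
        fun ξ => eval (point n x t ξ) R * Real.exp (eval (point n x t ξ) (phase n A)) := by
  induction l with
  | nil => exact ⟨1, conjH_one n A, by simp, by simp⟩
  | cons i l ih =>
    suffices H : ∀ k : ℕ, ∃ R : MvPolynomial (XTXi n) ℝ, conjH n A R = 0 ∧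
      tZero n R = rename (fun i => Sum.inl (Sum.inl i))
        (X i ^ k * (l.map fun i => X i ^ α i).prod) ∧
      ∀ x t, (pderivOp n i)^[k] (((l.map fun i => (pderivOp n i)^[α i]).foldr (· ∘ ·) id)
          (fun ξ => Real.exp (eval (point n x t ξ) (phase n A)))) =
        fun ξ => eval (point n x t ξ) R * Real.exp (eval (point n x t ξ) (phase n A)) by
      simpa using H (α i)
    intro k
    induction k with
    | zero => simpa using ih
    | succ k ihk =>
      obtain ⟨R, h1, h2, h3⟩ := ihk
      refine ⟨conjD (phase n A) (Sum.inr i) R, ?_, ?_, fun x t => ?_⟩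
      · rw [conjH_conjD, h1]; simp [conjD]
      · rw [tZero_conjD, h2]
        have h0 : ∀ p : MvPolynomial (Fin n) ℝ, pderiv (Sum.inr i)
            (rename (fun i => (Sum.inl (Sum.inl i) : XTXi n)) p) = 0 := by
          intro p
          induction p using MvPolynomial.induction_on with
          | C a => simp
          | add p q hp hq => simp [hp, hq]
          | mul_X p u hp => simp [Derivation.leibniz, hp, pderiv_X]
        rw [h0]
        simp only [map_mul, map_pow, rename_X]
        ring
      · rw [Function.iterate_succ_apply', h3, pderivOp_eval_exp]

open MvPolynomial in
/-- `w_α` is a polynomial solution of `H* w = 0` with initial value `x^α`. -/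
lemma exists_wPoly (n : ℕ) (A : Matrix (Fin n) (Fin n) ℝ) (α : Fin n → ℕ) :
    ∃ W : MvPolynomial (XT n) ℝ, formalH n A W = 0 ∧ atZero n W = ∏ i, X i ^ α i ∧
      ∀ x t, wPoly n A α x t = eval (Sum.elim x fun _ => t) W := by
  obtain ⟨R, h1, h2, h3⟩ := exists_fold n A α (List.finRange n)
  refine ⟨xiZero n R, ?_, ?_, fun x t => ?_⟩
  · rw [← xiZero_conjH, h1, map_zero]
  · have hc : (atZero n).comp (xiZero n) =
        ((atZero n).comp (xiZero n)).comp (tZero n) := by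
      apply MvPolynomial.algHom_ext
      rintro ((v | v) | v) <;> simp [atZero, xiZero, tZero]
    have hR : ∀ p : MvPolynomial (Fin n) ℝ, atZero n (xiZero n
        (rename (fun i => (Sum.inl (Sum.inl i) : XTXi n)) p)) = p := by
      intro p
      induction p using MvPolynomial.induction_on with
      | C a => simp [atZero, xiZero]
      | add p q hp hq => simp [hp, hq]
      | mul_X p u hp => rw [map_mul, map_mul, map_mul, hp]; simp [atZero, xiZero]
    have := DFunLike.congr_fun hc R
    simp only [AlgHom.comp_apply, h2, hR] at this
    rw [this, ← List.ofFn_eq_map, List.prod_ofFn]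
  · have hf : (fun ξ : Fin n → ℝ => Real.exp (x ⬝ᵥ ξ - t * ∑ h, ∑ k, A h k * ξ h * ξ k)) =
        fun ξ => Real.exp (eval (point n x t ξ) (phase n A)) := by
      funext ξ
      simp [phase, point, dotProduct]
    have h0 : eval (point n x t 0) (phase n A) = 0 := by
      simp [phase, point]
    have he : ∀ p : MvPolynomial (XTXi n) ℝ,
        eval (point n x t 0) p = eval (Sum.elim x fun _ => t) (xiZero n p) := by
      intro p
      induction p using MvPolynomial.induction_on with
      | C a => simp [xiZero]
      | add p q hp hq => simp [hp, hq]
      | mul_X p u hp =>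
        rw [map_mul, map_mul, map_mul, hp]
        rcases u with u | u <;> simp [xiZero, point]
    unfold wPoly multiDeriv
    rw [hf, List.ofFn_eq_map, h3 x t]
    simp only [h0, Real.exp_zero, mul_one, he]

theorem stmt_12 (n : ℕ) (hn : 3 ≤ n) (A : Matrix (Fin n) (Fin n) ℝ) (hA : A.PosDef)
    (q : (Fin n → ℝ) × ℝ → ℝ) (hq : IsPolynomialFun n q)
    (hHq : ∀ z : (Fin n → ℝ) × ℝ, HstarOp n A q z = 0) :
    ∃ (m : ℕ) (c : (Fin n → ℕ) → ℝ),
      ∀ (x : Fin n → ℝ) (t : ℝ),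
        q (x, t) = ∑ α ∈ multiIndicesLE n m, c α * wPoly n A α x t := by
  obtain ⟨P, hP⟩ := hq
  obtain rfl : q = fun z => MvPolynomial.eval (Sum.elim z.1 fun _ => z.2) P := funext hP
  have hF : formalH n A P = 0 := by
    apply MvPolynomial.funext
    intro v
    have := hHq (fun i => v (Sum.inl i), v (Sum.inr ()))
    rw [HstarOp_eval] at this
    rw [map_zero, ← this]
    congr 2
    funext u
    rcases u with u | u <;> rfl
  choose W hW1 hW2 hW3 using exists_wPoly n A
  set p := atZero n P with hp
  let c : (Fin n → ℕ) → ℝ := fun α => p.coeff (Finsupp.equivFunOnFinite.symm α)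
  refine ⟨p.totalDegree, c, fun x t => ?_⟩
  have hinit : ∑ α ∈ multiIndicesLE n p.totalDegree,
      MvPolynomial.C (c α) * ∏ i, MvPolynomial.X i ^ α i = p := by
    conv_rhs => rw [MvPolynomial.as_sum p]
    symm
    refine Finset.sum_of_injOn (fun s i => s i) (fun a _ b _ h => DFunLike.coe_injective h) ?_ ?_ ?_
    · intro s hs
      have hs' : ∑ i, s i ≤ p.totalDegree := by
        have := MvPolynomial.le_totalDegree (Finset.mem_coe.mp hs)
        rwa [Finsupp.sum_fintype _ _ (fun _ => rfl)] at this
      simp only [multiIndicesLE, Finset.coe_filter, Set.mem_ofPred_eq, Finset.mem_Icc]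
      refine ⟨⟨fun i => Nat.zero_le _, fun i => ?_⟩, hs'⟩
      exact (Finset.single_le_sum (f := fun i => s i) (fun _ _ => Nat.zero_le _)
        (Finset.mem_univ i)).trans hs'
    · intro α _ hα
      have : c α = 0 := by
        by_contra h
        exact hα ⟨Finsupp.equivFunOnFinite.symm α,
          Finset.mem_coe.mpr (MvPolynomial.mem_support_iff.mpr h), rfl⟩
      simp [this]
    · intro s _
      have : c (fun i => s i) = p.coeff s := by
        simp only [c]
        congr 1
        ext i
        rfl
      rw [this, MvPolynomial.monomial_eq, Finsupp.prod_fintype _ _ (fun _ => by simp)]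
  have hz := eq_zero_of_formal n A
    (P - ∑ α ∈ multiIndicesLE n p.totalDegree, MvPolynomial.C (c α) * W α) ?_ ?_
  · have := congrArg (MvPolynomial.eval (Sum.elim x fun _ => t)) (sub_eq_zero.mp hz)
    simpa [hW3] using this
  · have hsub : ∀ Q R, formalH n A (Q - R) = formalH n A Q - formalH n A R := by
      intro Q R
      simp only [formalH, map_sub, mul_sub, Finset.sum_sub_distrib]
      ring
    have hsum : ∀ s : Finset (Fin n → ℕ),
        formalH n A (∑ α ∈ s, MvPolynomial.C (c α) * W α) =
          ∑ α ∈ s, MvPolynomial.C (c α) * formalH n A (W α) := by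
      have hadd : ∀ Q R, formalH n A (Q + R) = formalH n A Q + formalH n A R := by
        intro Q R
        simp only [formalH, map_add, mul_add, Finset.sum_add_distrib]
        ring
      have hC : ∀ a Q, formalH n A (MvPolynomial.C a * Q) =
          MvPolynomial.C a * formalH n A Q := by
        intro a Q
        simp only [formalH, MvPolynomial.pderiv_C_mul, mul_add, Finset.mul_sum,
          mul_left_comm]
      intro s
      classical
      induction s using Finset.induction_on with
      | empty => simp [formalH]
      | insert a s ha ih => rw [Finset.sum_insert ha, Finset.sum_insert ha, hadd, hC, ih]
    rw [hsub, hF, hsum]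
    simp [hW1]
  · rw [map_sub, map_sum, ← hp, sub_eq_zero]
    refine hinit.symm.trans (Finset.sum_congr rfl fun α _ => ?_)
    rw [map_mul, hW2]
    simp [atZero]
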